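/- arXiv:0907.2093 — 2 statements merged into one kernel-verified Lean document; each statement's English description precedes it below -/
import Mathlib

section
/- Let m > 0 and c > 0 be real numbers, and let R̂ > 0 satisfy (R̂/m - 1)·e^{R̂/m} = 1/c. Define f(R) = R·e^{-R/m} / (c + e^{-R/m}) for R ≥ 0. Then f(R̂) = R̂ - m = (m/c)·e^{-R̂/m}, and f(R) ≤ R̂ - m for every R ≥ 0. -/
/-!
Write `E = e^{-R/m}`. Because the denominator `c + E` is positive, `R E / (c + E) ≤ a` means
`(R - a) E ≤ c a`, and equality in one is equality in the other. As `R` varies, the left-hand side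
is largest at `R = a + m`, where it equals `m e^{-(a + m)/m}`. So `a = R̂ - m` is the maximal
throughput as soon as `m e^{-R̂/m} = c (R̂ - m)`, and this is the critical-point equation.
-/

/-- The one-bit-feedback throughput `γ̂(R)` at fixed transmission rate `R`, where the first-level
rate is exponentially distributed with mean `m` and `c` is the ratio `τ/p_s`. -/
noncomputable def oneBitThroughput (m c R : ℝ) : ℝ :=
  R * Real.exp (-(R / m)) / (c + Real.exp (-(R / m)))

section

variable {m c r : ℝ}

theorem oneBitThroughput_le_iff (hc : 0 ≤ c) {R a : ℝ} :
    oneBitThroughput m c R ≤ a ↔ (R - a) * Real.exp (-(R / m)) ≤ c * a := by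
  rw [oneBitThroughput, div_le_iff₀ (by positivity)]
  constructor <;> intro h <;> linarith

theorem oneBitThroughput_eq_iff (hc : 0 ≤ c) {R a : ℝ} :
    oneBitThroughput m c R = a ↔ (R - a) * Real.exp (-(R / m)) = c * a := by
  rw [oneBitThroughput, div_eq_iff (by positivity)]
  constructor <;> intro h <;> linarith

theorem add_one_mul_exp_neg_le_exp_neg (x y : ℝ) :
    (x - y + 1) * Real.exp (-x) ≤ Real.exp (-y) :=
  calc (x - y + 1) * Real.exp (-x)
      ≤ Real.exp (x - y) * Real.exp (-x) := by gcongr; exact Real.add_one_le_exp _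
    _ = Real.exp (-y) := by rw [← Real.exp_add]; ring_nf

theorem sub_mul_exp_neg_div_le (hm : 0 < m) (R a : ℝ) :
    (R - a) * Real.exp (-(R / m)) ≤ m * Real.exp (-((a + m) / m)) :=
  calc (R - a) * Real.exp (-(R / m))
      = m * ((R / m - (a + m) / m + 1) * Real.exp (-(R / m))) := by field_simp; ring
    _ ≤ m * Real.exp (-((a + m) / m)) := by
      gcongr
      exact add_one_mul_exp_neg_le_exp_neg _ _

theorem mul_exp_neg_div_eq_of_critical (hm : m ≠ 0) (hc : c ≠ 0)
    (hr : (r / m - 1) * Real.exp (r / m) = 1 / c) :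
    m * Real.exp (-(r / m)) = c * (r - m) := by
  rw [Real.exp_neg]
  field_simp at hr ⊢
  linarith

theorem oneBitThroughput_of_critical (hm : m ≠ 0) (hc : 0 < c)
    (hr : (r / m - 1) * Real.exp (r / m) = 1 / c) :
    oneBitThroughput m c r = r - m := by
  rw [oneBitThroughput_eq_iff hc.le, sub_sub_cancel, mul_exp_neg_div_eq_of_critical hm hc.ne' hr]

theorem oneBitThroughput_le_of_critical (hm : 0 < m) (hc : 0 < c)
    (hr : (r / m - 1) * Real.exp (r / m) = 1 / c) (R : ℝ) :
    oneBitThroughput m c R ≤ r - m := by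
  rw [oneBitThroughput_le_iff hc.le, ← mul_exp_neg_div_eq_of_critical hm.ne' hc.ne' hr]
  simpa only [sub_add_cancel] using sub_mul_exp_neg_div_le hm R (r - m)

end

/-- Equation (max_1_bit): if `R̂` solves `(R̂/m - 1)·e^{R̂/m} = 1/c`, then the
one-bit throughput `f(R) = R·e^{-R/m}/(c + e^{-R/m})` attains its maximum
over `R ≥ 0` at `R̂`, with `f(R̂) = R̂ - m = (m/c)·e^{-R̂/m}`. -/
theorem oneBit_max_throughput (m c Rhat : ℝ) (hm : 0 < m) (hc : 0 < c)
    (hRhat : 0 < Rhat) (heq : (Rhat / m - 1) * Real.exp (Rhat / m) = 1 / c)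
    (f : ℝ → ℝ)
    (hf : ∀ R, f R = R * Real.exp (-(R / m)) / (c + Real.exp (-(R / m)))) :
    f Rhat = Rhat - m ∧
    f Rhat = (m / c) * Real.exp (-(Rhat / m)) ∧
    ∀ R : ℝ, 0 ≤ R → f R ≤ Rhat - m := by
  obtain rfl : f = oneBitThroughput m c := funext hf
  have hmax : oneBitThroughput m c Rhat = Rhat - m := oneBitThroughput_of_critical hm.ne' hc heq
  refine ⟨hmax, ?_, fun R _ => oneBitThroughput_le_of_critical hm hc heq R⟩
  rw [hmax, div_mul_eq_mul_div, mul_exp_neg_div_eq_of_critical hm.ne' hc.ne' heq,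
    mul_div_cancel_left₀ _ hc.ne']
end

section
/- Let p_s ∈ (0,1) and τ ∈ (0,1) be real numbers with τ ≥ (1/2)·ln(1 + 1/p_s), and let R₁, E₂ be real numbers with R₁ ≥ E₂ > 0. Set R_e = E₂/(1 + 2τ) and γ_L = (1-τ)·R₁ / ((1-τ) + τ·(1 + 1/p_s)·e^{R₁/E₂}). Then for every real γ ≥ γ_L, one has (1-τ)·(R₁ - γ)·e^{-R₁/R_e} - γτ ≤ 0. -/
/-!
The probing reward at exceedance probability `q` is nonpositive exactly when the throughput `γ` is
at least a break-even value, and this value increases with `q`. The bound `γL` is the break-even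
value at `q = exp (-(R₁ / E₂)) / (1 + 1 / ps)`, while the limiting reward has
`q = exp (-(R₁ / Re)) = exp (-(R₁ / E₂)) * exp (-(2 * τ * (R₁ / E₂)))`. Since `1 ≤ R₁ / E₂`, the
overhead condition `1 + 1 / ps ≤ exp (2 * τ)` makes the second probability the smaller one.
-/

/-- The second-level probing reward with probing overhead `τ`, first-level rate `R` and throughput
`γ`, as a function of the probability `q` (`1 - G(R₁|x)` in the paper) that the refined rate
exceeds `R`. -/
def probingReward (τ R γ q : ℝ) : ℝ :=
  (1 - τ) * (R - γ) * q - γ * τ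

/-- The throughput `γ` at which `probingReward τ R γ q` vanishes, provided that the denominator is
nonzero. -/
noncomputable def breakEvenThroughput (τ R q : ℝ) : ℝ :=
  (1 - τ) * R * q / ((1 - τ) * q + τ)

section BreakEven

variable {τ R q : ℝ}

lemma breakEvenThroughput_denom_pos (hτ : τ ∈ Set.Icc (0 : ℝ) 1) (hq : 0 < q) :
    0 < (1 - τ) * q + τ := by
  simpa only [smul_eq_mul, mul_one, Set.mem_Ioi] using
    convex_Ioi (0 : ℝ) (Set.mem_Ioi.2 hq) (Set.mem_Ioi.2 one_pos) (sub_nonneg.2 hτ.2) hτ.1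
      (sub_add_cancel 1 τ)

lemma probingReward_nonpos_iff {γ : ℝ} (hD : 0 < (1 - τ) * q + τ) :
    probingReward τ R γ q ≤ 0 ↔ breakEvenThroughput τ R q ≤ γ := by
  have hreward : probingReward τ R γ q = (1 - τ) * R * q - γ * ((1 - τ) * q + τ) := by
    rw [probingReward]
    ring
  rw [hreward, sub_nonpos, breakEvenThroughput, div_le_iff₀ hD]

lemma monotoneOn_breakEvenThroughput (hτ : τ ∈ Set.Icc (0 : ℝ) 1) (hR : 0 ≤ R) :
    MonotoneOn (breakEvenThroughput τ R) (Set.Ioi 0) := by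
  intro q hq q' hq' hqq'
  have hcoeff : 0 ≤ (1 - τ) * R * τ :=
    mul_nonneg (mul_nonneg (sub_nonneg.2 hτ.2) hR) hτ.1
  rw [breakEvenThroughput, breakEvenThroughput,
    div_le_div_iff₀ (breakEvenThroughput_denom_pos hτ hq) (breakEvenThroughput_denom_pos hτ hq')]
  -- The terms in `q * q'` cancel.
  linarith [mul_le_mul_of_nonneg_left hqq' hcoeff]

lemma breakEvenThroughput_inv (hq : q ≠ 0) :
    breakEvenThroughput τ R q⁻¹ = (1 - τ) * R / ((1 - τ) + τ * q) := by
  rw [breakEvenThroughput, ← mul_div_mul_right _ _ hq, add_mul,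
    inv_mul_cancel_right₀ hq, inv_mul_cancel_right₀ hq]

end BreakEven

lemma mul_exp_le_exp_one_add_mul {c t r : ℝ} (hc : 0 < c) (ht : 0 ≤ t) (hct : Real.log c ≤ t)
    (hr : 1 ≤ r) : c * Real.exp r ≤ Real.exp ((1 + t) * r) :=
  calc c * Real.exp r ≤ Real.exp (t * r) * Real.exp r := by
        gcongr
        exact (Real.log_le_iff_le_exp hc).1 (hct.trans (le_mul_of_one_le_right ht hr))
    _ = Real.exp ((1 + t) * r) := by rw [← Real.exp_add]; ring_nf

theorem limit_at_zero_nonpos_general {c t τ R₁ E₂ Re γL γ : ℝ}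
    (hc : 0 < c) (ht : 0 ≤ t) (hct : Real.log c ≤ t) (hτ : τ ∈ Set.Icc (0 : ℝ) 1)
    (hE : 0 < E₂) (hRE : E₂ ≤ R₁)
    (hRe : Re = E₂ / (1 + t))
    (hγL : γL = (1 - τ) * R₁ / ((1 - τ) + τ * c * Real.exp (R₁ / E₂)))
    (hγ : γL ≤ γ) :
    (1 - τ) * (R₁ - γ) * Real.exp (-(R₁ / Re)) - γ * τ ≤ 0 := by
  have hA : 0 < c * Real.exp (R₁ / E₂) := by positivity
  have hexceed : Real.exp (-(R₁ / Re)) ≤ (c * Real.exp (R₁ / E₂))⁻¹ := by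
    rw [Real.exp_neg, hRe, div_div_eq_mul_div, mul_comm R₁, mul_div_assoc]
    exact inv_anti₀ hA (mul_exp_le_exp_one_add_mul hc ht hct ((one_le_div hE).2 hRE))
  have hq : 0 < Real.exp (-(R₁ / Re)) := Real.exp_pos _
  refine (probingReward_nonpos_iff (breakEvenThroughput_denom_pos hτ hq)).2 ?_
  calc breakEvenThroughput τ R₁ (Real.exp (-(R₁ / Re)))
      ≤ breakEvenThroughput τ R₁ (c * Real.exp (R₁ / E₂))⁻¹ :=
        monotoneOn_breakEvenThroughput hτ (hE.le.trans hRE) hq (inv_pos.2 hA) hexceed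
    _ = γL := by rw [breakEvenThroughput_inv hA.ne', hγL, mul_assoc τ]
    _ ≤ γ := hγ

/-- Negativity of the `x → 0` limit in Lemma 5(i): under the overhead
condition `τ ≥ (1/2)·ln(1 + 1/p_s)`, with `R₁ ≥ E₂ > 0`,
`R_e = E₂/(1+2τ)` and `γ_L` the lower throughput bound of Lemma 4, every
`γ ≥ γ_L` satisfies `(1-τ)(R₁-γ)e^{-R₁/R_e} - γτ ≤ 0`. -/
theorem limit_at_zero_nonpos (ps τ R₁ E₂ Re γL : ℝ)
    (hps : ps ∈ Set.Ioo (0 : ℝ) 1) (hτ : τ ∈ Set.Ioo (0 : ℝ) 1)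
    (hτ2 : (1 / 2) * Real.log (1 + 1 / ps) ≤ τ)
    (hE : 0 < E₂) (hRE : E₂ ≤ R₁)
    (hRe : Re = E₂ / (1 + 2 * τ))
    (hγL : γL = (1 - τ) * R₁ / ((1 - τ) + τ * (1 + 1 / ps) * Real.exp (R₁ / E₂))) :
    ∀ γ : ℝ, γL ≤ γ → (1 - τ) * (R₁ - γ) * Real.exp (-(R₁ / Re)) - γ * τ ≤ 0 := by
  have hc : 0 < 1 + 1 / ps := add_pos one_pos (one_div_pos.2 hps.1)
  exact fun γ ↦ limit_at_zero_nonpos_general hc (by linarith [hτ.1]) (by linarith)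
    (Set.Ioo_subset_Icc_self hτ) hE hRE hRe hγL
end
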